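/- arXiv:1509.02141 — 2 statements merged into one kernel-verified Lean document; each statement's English description precedes it below -/
import Mathlib

section
/- Let μ be a positive Borel measure on ℝ that is 1-periodic (μ(A + 1) = μ(A) for every Borel set A) and finite on compact sets, let p ≥ 1, δ ∈ (0,1), and set C = μ([0,1)). Then ∫₀¹ μ((x−δ, x+δ))^p dx ≤ 3·(2C)^p·δ. In particular (∫₀¹ μ((x−δ, x+δ))^p dx)^{1/p} = O(δ^{1/p}) as δ ↓ 0. -/
open MeasureTheory

/-!
Let `μ` have period `T` and put `C = μ [0, T)`. Averaging `μ (x - δ, x + δ)` over a period and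
exchanging the two integrals gives exactly `2 δ C`, since both orders of integration count the pairs
`|x - y| < δ` modulo simultaneous translation. When `2 δ ≤ n T` the interval lies in `n` consecutive
periods, so `μ (x - δ, x + δ) ^ p ≤ (n C) ^ (p - 1) μ (x - δ, x + δ)`, and integrating bounds the
`p`-th moment by `(n C) ^ (p - 1) · 2 δ C = (n C) ^ p · 2 δ / n`. For `T = 1` and `δ < 1` take
`n = 2`.
-/

open Set Metric
open scoped ENNReal

section FundamentalDomain

variable {G α β : Type*} [AddGroup G] [AddAction G α] [AddAction G β]
  [MeasurableSpace α] [MeasurableSpace β]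

theorem vaddInvariantMeasure_zmultiples [MeasurableConstVAdd G α] {μ : Measure α} {g : G}
    (hg : MeasurePreserving (g +ᵥ ·) μ μ) :
    VAddInvariantMeasure (AddSubgroup.zmultiples g) α μ := by
  suffices h : ∀ k ∈ AddSubgroup.closure {g}, MeasurePreserving (k +ᵥ · : α → α) μ μ by
    rw [AddSubgroup.zmultiples_eq_closure]
    exact ⟨fun k _ hs => (h k k.2).measure_preimage hs.nullMeasurableSet⟩
  intro k hk
  induction hk using AddSubgroup.closure_induction with
  | mem k hk => rwa [mem_singleton_iff.1 hk]
  | zero => simpa only [zero_vadd] using! MeasurePreserving.id μ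
  | add k l _ _ hk hl => simpa only [add_vadd] using! hk.comp hl
  | neg k _ hk => exact MeasurePreserving.symm (MeasurableEquiv.vadd k) hk

variable [Countable G] [MeasurableConstVAdd G α] [MeasurableConstVAdd G β]
  {μ : Measure α} {ν : Measure β} [SFinite μ] [SFinite ν]
  [VAddInvariantMeasure G α μ] [VAddInvariantMeasure G β ν] {s : Set α} {t : Set β}

/-- The mass transport principle: each side is the integral of `f` over the quotient of `α × β` by
the diagonal action of `G`. -/
theorem setLIntegral_lintegral_eq_of_diagonal_invariant
    (hs : IsAddFundamentalDomain G s μ) (ht : IsAddFundamentalDomain G t ν) {f : α → β → ℝ≥0∞}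
    (hf : Measurable (Function.uncurry f)) (hinv : ∀ (g : G) x y, f (g +ᵥ x) (g +ᵥ y) = f x y) :
    ∫⁻ x in s, ∫⁻ y, f x y ∂ν ∂μ = ∫⁻ y in t, ∫⁻ x, f x y ∂μ ∂ν := by
  have hf_vadd (g : G) : Measurable fun q : α × β => f (g +ᵥ q.1) q.2 :=
    hf.comp ((measurable_fst.const_vadd g).prodMk measurable_snd)
  have hshift (g : G) (x : α) (y : β) : f x (-g +ᵥ y) = f (g +ᵥ x) y := by
    rw [← hinv g, vadd_neg_vadd]
  calc ∫⁻ x in s, ∫⁻ y, f x y ∂ν ∂μ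
      = ∫⁻ x in s, ∑' g : G, ∫⁻ y in t, f (g +ᵥ x) y ∂ν ∂μ := by
        simp_rw [ht.lintegral_eq_tsum', hshift]
    _ = ∑' g : G, ∫⁻ x in s, ∫⁻ y in t, f (g +ᵥ x) y ∂ν ∂μ :=
        lintegral_tsum fun g => (hf_vadd g).lintegral_prod_right'.aemeasurable
    _ = ∑' g : G, ∫⁻ y in t, ∫⁻ x in s, f (g +ᵥ x) y ∂μ ∂ν :=
        tsum_congr fun g => lintegral_lintegral_swap (hf_vadd g).aemeasurable
    _ = ∫⁻ y in t, ∑' g : G, ∫⁻ x in s, f (g +ᵥ x) y ∂μ ∂ν :=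
        (lintegral_tsum fun g => (hf_vadd g).lintegral_prod_left'.aemeasurable).symm
    _ = ∫⁻ y in t, ∫⁻ x, f x y ∂μ ∂ν := by
        simp_rw [hs.lintegral_eq_tsum'']

end FundamentalDomain

section Ball

variable {X : Type*} [PseudoMetricSpace X] [SecondCountableTopology X] [MeasurableSpace X]
  [OpensMeasurableSpace X]

theorem measurableSet_setOf_dist_lt (r : ℝ) : MeasurableSet {q : X × X | dist q.2 q.1 < r} :=
  measurableSet_lt (measurable_snd.dist measurable_fst) measurable_const

theorem measurable_measure_ball (μ : Measure X) [SFinite μ] (r : ℝ) :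
    Measurable fun x => μ (ball x r) :=
  measurable_measure_prodMk_left (measurableSet_setOf_dist_lt r)

theorem setLIntegral_measure_ball_comm {G : Type*} [AddGroup G] [Countable G] [AddAction G X]
    [IsIsometricVAdd G X] [MeasurableConstVAdd G X] {μ ν : Measure X} [SFinite μ] [SFinite ν]
    [VAddInvariantMeasure G X μ] [VAddInvariantMeasure G X ν] {s t : Set X}
    (hs : IsAddFundamentalDomain G s μ) (ht : IsAddFundamentalDomain G t ν) (r : ℝ) :
    ∫⁻ x in s, ν (ball x r) ∂μ = ∫⁻ y in t, μ (ball y r) ∂ν := by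
  let f (x y : X) : ℝ≥0∞ := (ball x r).indicator 1 y
  have hf : Measurable (Function.uncurry f) :=
    measurable_one.indicator (measurableSet_setOf_dist_lt r)
  have hf_comm (x y : X) : f x y = (ball y r).indicator 1 x :=
    indicator_const_eq_indicator_const mem_ball_comm
  have hf_vadd (g : G) (x y : X) : f (g +ᵥ x) (g +ᵥ y) = f x y :=
    indicator_const_eq_indicator_const (by simp only [mem_ball, dist_vadd])
  calc ∫⁻ x in s, ν (ball x r) ∂μ = ∫⁻ x in s, ∫⁻ y, f x y ∂ν ∂μ := by
        simp_rw [f, lintegral_indicator_one measurableSet_ball]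
    _ = ∫⁻ y in t, ∫⁻ x, f x y ∂μ ∂ν :=
        setLIntegral_lintegral_eq_of_diagonal_invariant hs ht hf hf_vadd
    _ = ∫⁻ y in t, μ (ball y r) ∂ν := by
        simp_rw [hf_comm, lintegral_indicator_one measurableSet_ball]

end Ball

theorem integral_rpow_le_rpow_sub_one_mul_integral {α : Type*} [MeasurableSpace α] {μ : Measure α}
    {f : α → ℝ} {M p : ℝ} (hf : Integrable f μ) (hf_nonneg : 0 ≤ᵐ[μ] f) (hf_le : ∀ᵐ x ∂μ, f x ≤ M)
    (hp : 1 ≤ p) : ∫ x, f x ^ p ∂μ ≤ M ^ (p - 1) * ∫ x, f x ∂μ := by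
  rw [← integral_const_mul]
  refine integral_mono_of_nonneg ?_ (hf.const_mul _) ?_
  · filter_upwards [hf_nonneg] with x hx using Real.rpow_nonneg hx p
  · filter_upwards [hf_nonneg, hf_le] with x hx hxM
    calc f x ^ p = f x ^ (p - 1) * f x := by
          rw [← Real.rpow_add_one' hx (by linarith), sub_add_cancel]
      _ ≤ M ^ (p - 1) * f x :=
          mul_le_mul_of_nonneg_right (Real.rpow_le_rpow hx hxM (by linarith)) hx

section Periodic

variable {μ : Measure ℝ} {T : ℝ}

theorem isAddFundamentalDomain_Ico (hT : 0 < T) (a : ℝ) (μ : Measure ℝ) :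
    IsAddFundamentalDomain (AddSubgroup.zmultiples T) (Ico a (a + T)) μ := by
  refine .mk' nullMeasurableSet_Ico fun x => ?_
  have hbij : Function.Bijective fun n : ℤ =>
      (⟨n • T, n, rfl⟩ : AddSubgroup.zmultiples T) :=
    (Equiv.ofInjective _ (zsmul_left_strictMono hT).injective).bijective
  refine hbij.existsUnique_iff.2 ?_
  simpa only [add_comm x] using! existsUnique_add_zsmul_mem_Ico hT x a

variable [VAddInvariantMeasure (AddSubgroup.zmultiples T) ℝ μ]

theorem measure_Ico_add_period_eq (hT : 0 < T) (a b : ℝ) :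
    μ (Ico a (a + T)) = μ (Ico b (b + T)) :=
  (isAddFundamentalDomain_Ico hT a μ).measure_eq (isAddFundamentalDomain_Ico hT b μ)

theorem measure_Ico_add_nat_mul_period (hT : 0 < T) (a b : ℝ) (n : ℕ) :
    μ (Ico a (a + n * T)) = n * μ (Ico b (b + T)) := by
  induction n with
  | zero => simp
  | succ n ih =>
    have hsplit : Ico a (a + (n + 1 : ℕ) * T) =
        Ico a (a + n * T) ∪ Ico (a + n * T) (a + n * T + T) := by
      rw [Ico_union_Ico_eq_Ico (le_add_of_nonneg_right (by positivity)) (by linarith),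
        Nat.cast_succ, add_one_mul, add_assoc]
    rw [hsplit, measure_union Ico_disjoint_Ico_same measurableSet_Ico, ih,
      measure_Ico_add_period_eq hT (a + n * T) b, Nat.cast_succ, add_one_mul]

theorem measure_ball_le_nat_mul_measure_Ico (hT : 0 < T) (b x : ℝ) {δ : ℝ} {n : ℕ}
    (hn : 2 * δ ≤ n * T) : μ (ball x δ) ≤ n * μ (Ico b (b + T)) := by
  rw [← measure_Ico_add_nat_mul_period hT (x - δ), Real.ball_eq_Ioo]
  exact measure_mono (Ioo_subset_Ico_self.trans (Ico_subset_Ico_right (by linarith)))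

theorem setLIntegral_measure_ball_period [SFinite μ] (hT : 0 < T) (a b δ : ℝ) :
    ∫⁻ x in Ico a (a + T), μ (ball x δ) = ENNReal.ofReal (2 * δ) * μ (Ico b (b + T)) := by
  have : IsIsometricVAdd (AddSubgroup.zmultiples T) ℝ := ⟨fun g => isometry_vadd ℝ (g : ℝ)⟩
  rw [setLIntegral_measure_ball_comm (isAddFundamentalDomain_Ico hT a volume)
    (isAddFundamentalDomain_Ico hT b μ)]
  simp_rw [Real.volume_ball, setLIntegral_const]

variable [IsFiniteMeasureOnCompacts μ]

theorem integrableOn_measureReal_ball_period (hT : 0 < T) (a δ : ℝ) :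
    IntegrableOn (fun x => μ.real (ball x δ)) (Ico a (a + T)) := by
  refine integrable_toReal_of_lintegral_ne_top (measurable_measure_ball μ δ).aemeasurable ?_
  rw [setLIntegral_measure_ball_period hT a a]
  exact ENNReal.mul_ne_top ENNReal.ofReal_ne_top measure_Ico_lt_top.ne

theorem setIntegral_measureReal_ball_period (hT : 0 < T) (a b : ℝ) {δ : ℝ} (hδ : 0 ≤ δ) :
    ∫ x in Ico a (a + T), μ.real (ball x δ) = 2 * δ * μ.real (Ico b (b + T)) := by
  simp_rw [measureReal_def]
  rw [integral_toReal (measurable_measure_ball μ δ).aemeasurable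
      (.of_forall fun _ => measure_ball_lt_top),
    setLIntegral_measure_ball_period hT a b, ENNReal.toReal_mul,
    ENNReal.toReal_ofReal (by positivity)]

theorem measureReal_ball_le_nat_mul_measureReal_Ico (hT : 0 < T) (b x : ℝ) {δ : ℝ} {n : ℕ}
    (hn : 2 * δ ≤ n * T) : μ.real (ball x δ) ≤ n * μ.real (Ico b (b + T)) := by
  have hfin : n * μ (Ico b (b + T)) ≠ ∞ :=
    ENNReal.mul_ne_top (ENNReal.natCast_ne_top n) measure_Ico_lt_top.ne
  simpa only [ENNReal.toReal_mul, ENNReal.toReal_natCast] using!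
    ENNReal.toReal_mono hfin (measure_ball_le_nat_mul_measure_Ico hT b x hn)

theorem setIntegral_measureReal_ball_rpow_period_le (hT : 0 < T) (a b : ℝ) {p δ : ℝ} (hp : 1 ≤ p)
    (hδ : 0 ≤ δ) {n : ℕ} (hn : 2 * δ ≤ n * T) :
    ∫ x in Ico a (a + T), μ.real (ball x δ) ^ p ≤
      (n * μ.real (Ico b (b + T))) ^ (p - 1) * (2 * δ * μ.real (Ico b (b + T))) := by
  rw [← setIntegral_measureReal_ball_period hT a b hδ]
  exact integral_rpow_le_rpow_sub_one_mul_integral (integrableOn_measureReal_ball_period hT a δ)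
    (.of_forall fun _ => measureReal_nonneg)
    (.of_forall fun x => measureReal_ball_le_nat_mul_measureReal_Ico hT b x hn) hp

end Periodic

theorem stmt15_general (μ : Measure ℝ) [IsFiniteMeasureOnCompacts μ] {T : ℝ} (hT : 0 < T)
    (hper : ∀ A : Set ℝ, MeasurableSet A → μ ((fun x => x + T) ⁻¹' A) = μ A)
    {p : ℝ} (hp : 1 ≤ p) {δ : ℝ} (hδ : 0 ≤ δ) {n : ℕ} (hn_pos : 0 < n) (hn : 2 * δ ≤ n * T) :
    ∫ x in Icc 0 T, (μ (Ioo (x - δ) (x + δ))).toReal ^ p ≤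
      (n * (μ (Ico 0 T)).toReal) ^ p * (2 * δ / n) := by
  have hpres : MeasurePreserving (T +ᵥ ·) μ μ := by
    simp_rw [vadd_eq_add, add_comm T]
    exact ⟨measurable_add_const T, Measure.ext fun A hA => by
      rw [Measure.map_apply (measurable_add_const T) hA, hper A hA]⟩
  have : VAddInvariantMeasure (AddSubgroup.zmultiples T) ℝ μ :=
    vaddInvariantMeasure_zmultiples hpres
  have hbound := setIntegral_measureReal_ball_rpow_period_le (μ := μ) hT 0 0 hp hδ hn
  simp_rw [Real.ball_eq_Ioo, zero_add, measureReal_def] at hbound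
  rw [integral_Icc_eq_integral_Ico]
  refine hbound.trans_eq ?_
  rw [← sub_add_cancel p 1, Real.rpow_add_one' (by positivity) (by linarith), add_sub_cancel_right]
  field_simp

/-- If `μ` is a `1`-periodic positive Borel measure on `ℝ`, finite on
compact sets, `p ≥ 1`, `δ ∈ (0,1)` and `C = μ([0,1))`, then
`∫₀¹ μ((x-δ,x+δ))^p dx ≤ 3·(2C)^p·δ`. -/
theorem stmt15 (μ : Measure ℝ) [IsFiniteMeasureOnCompacts μ]
    (hper : ∀ A : Set ℝ, MeasurableSet A → μ ((fun x => x + 1) ⁻¹' A) = μ A)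
    (p : ℝ) (hp : 1 ≤ p) (δ : ℝ) (hδ0 : 0 < δ) (hδ1 : δ < 1) :
    ∫ x in Set.Icc (0 : ℝ) 1, (μ (Set.Ioo (x - δ) (x + δ))).toReal ^ p ≤
      3 * (2 * (μ (Set.Ico (0 : ℝ) 1)).toReal) ^ p * δ := by
  refine (stmt15_general μ one_pos hper hp hδ0.le two_pos (by push_cast; linarith)).trans ?_
  have : 0 ≤ (2 * (μ (Ico 0 1)).toReal) ^ p * δ := by positivity
  push_cast
  linarith
end

section
/- There is an absolute constant c > 0 (one may take c = 1/(3(π²/4+1))) with the following property: for every finite positive Borel measure λ on the closed unit disc, every r ∈ [0,1) and every φ ∈ ℝ, one has ∫_{C(φ,(1−r)/2)} K(re^{iφ}, ζ) dλ(ζ) ≥ c · λ(C(φ,(1−r)/2))/(1−r), where K(z,ζ) = (1/(1−|ζ|))·log|(1−z·conj(ζ))/(z−ζ)| for ζ ∈ 𝔻 and K(z, e^{iθ}) = (1−|z|²)/|e^{iθ}−z|² for boundary points. -/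
/-!
Write `ρ = ‖ζ‖` and `A = ‖1 - z * conj ζ‖`. From `A² = ‖ζ - z‖² + (1 - ‖z‖²)(1 - ρ²)` and
`1 - x⁻¹ ≤ log x` one gets `K(z, ζ) ≥ (1 - ‖z‖²)(1 + ρ) / (2A²)`, an equality on the unit circle.
For `z = r e^{iφ}` and `ζ ∈ C(φ, (1 - r) / 2)` both `1 - rρ` and the angle between `z` and `ζ` are
`O(1 - r)`, so `A² = O((1 - r)²)` and `K(z, ζ)` is at least a constant multiple of `1 / (1 - r)`.
It remains to integrate over the box.
-/

open MeasureTheory Complex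

/-- The Carleson box `C(φ,δ) = {ζ ∈ closure 𝔻 : |ζ| ≥ 1-δ, |arg ζ - φ| ≤ πδ}`
(the angular condition is expressed via a representative `θ` of the argument,
so that it is `2π`-periodic in `φ`). -/
noncomputable def carlesonBox (φ δ : ℝ) : Set ℂ :=
  {ζ : ℂ | ‖ζ‖ ≤ 1 ∧ 1 - δ ≤ ‖ζ‖ ∧
    ∃ θ : ℝ, |θ - φ| ≤ Real.pi * δ ∧
      ζ = (‖ζ‖ : ℂ) * Complex.exp (θ * Complex.I)}

/-- The kernel `K(z,ζ) = (1/(1-|ζ|))·log|(1-z·conj ζ)/(z-ζ)|` for `ζ ∈ 𝔻`,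
extended to the boundary by `K(z,ζ) = (1-|z|²)/|ζ-z|²` for `|ζ| ≥ 1`. -/
noncomputable def KkerExt (z ζ : ℂ) : ℝ :=
  if ‖ζ‖ < 1 then
    (1 / (1 - ‖ζ‖)) * Real.log (‖(1 - z * (starRingEnd ℂ) ζ) / (z - ζ)‖)
  else (1 - ‖z‖ ^ 2) / ‖ζ - z‖ ^ 2

open scoped Real ComplexConjugate

lemma norm_one_sub_mul_conj_pos {𝕜 : Type*} [RCLike 𝕜] {z w : 𝕜} (hz : ‖z‖ < 1) (hw : ‖w‖ ≤ 1) :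
    0 < ‖1 - z * conj w‖ := by
  have h_lt : ‖z * conj w‖ < 1 := by
    rw [norm_mul, RCLike.norm_conj]
    exact mul_lt_one_of_nonneg_of_lt_one_left (norm_nonneg z) hz hw
  refine norm_pos_iff.mpr (sub_ne_zero.mpr fun h => h_lt.ne ?_)
  rw [← h, norm_one]

lemma norm_one_sub_mul_conj_sq {𝕜 : Type*} [RCLike 𝕜] (z w : 𝕜) :
    ‖1 - z * conj w‖ ^ 2 = ‖w - z‖ ^ 2 + (1 - ‖z‖ ^ 2) * (1 - ‖w‖ ^ 2) := by
  simp only [← RCLike.normSq_eq_def', RCLike.normSq_sub, map_mul, map_one, RCLike.normSq_conj,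
    RCLike.conj_conj, one_mul, mul_comm (conj z) w]
  ring

lemma norm_ofReal_mul_exp_ofReal_mul_I {r : ℝ} (hr : 0 ≤ r) (θ : ℝ) :
    ‖(r : ℂ) * exp (θ * I)‖ = r := by
  rw [norm_mul, norm_exp_ofReal_mul_I, mul_one, norm_real, Real.norm_of_nonneg hr]

lemma norm_one_sub_ofReal_mul_exp_sq (a x : ℝ) :
    ‖1 - a * exp (x * I)‖ ^ 2 = 1 - 2 * a * Real.cos x + a ^ 2 := by
  have h_re : (a * exp (x * I)).re = a * Real.cos x := by
    rw [re_ofReal_mul, exp_ofReal_mul_I_re]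
  have h_norm : normSq (a * exp (x * I)) = a ^ 2 := by
    rw [normSq_eq_norm_sq, norm_mul, norm_exp_ofReal_mul_I, mul_one, norm_real, Real.norm_eq_abs,
      sq_abs]
  rw [← normSq_eq_norm_sq, normSq_sub, map_one, one_mul, conj_re, h_re, h_norm]
  ring

lemma norm_one_sub_ofReal_mul_exp_sq_le {a : ℝ} (ha : 0 ≤ a) (x : ℝ) :
    ‖1 - a * exp (x * I)‖ ^ 2 ≤ (1 - a) ^ 2 + a * x ^ 2 := by
  rw [norm_one_sub_ofReal_mul_exp_sq]
  linarith [mul_le_mul_of_nonneg_left (Real.one_sub_sq_div_two_le_cos (x := x)) ha]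

lemma carlesonBox_eq_image (φ δ : ℝ) :
    carlesonBox φ δ = (fun p : ℝ × ℝ => (p.1 : ℂ) * exp (p.2 * I)) ''
      Set.Icc (max 0 (1 - δ)) 1 ×ˢ Set.Icc (φ - π * δ) (φ + π * δ) := by
  ext ζ
  constructor
  · rintro ⟨h_le, h_ge, θ, hθ, hζ⟩
    have hθ_mem := Set.mem_Icc_iff_abs_le.mp (abs_sub_comm θ φ ▸ hθ)
    exact ⟨(‖ζ‖, θ), ⟨⟨max_le (norm_nonneg ζ) h_ge, h_le⟩, hθ_mem⟩, hζ.symm⟩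
  · rintro ⟨⟨ρ, θ⟩, ⟨⟨h_ge, h_le⟩, hθ⟩, rfl⟩
    obtain ⟨h0, h_ge⟩ := max_le_iff.mp h_ge
    have hρ := norm_ofReal_mul_exp_ofReal_mul_I h0 θ
    refine ⟨hρ.trans_le h_le, h_ge.trans_eq hρ.symm, θ, ?_, by rw [hρ]⟩
    exact abs_sub_comm φ θ ▸ Set.mem_Icc_iff_abs_le.mpr hθ

lemma isCompact_carlesonBox (φ δ : ℝ) : IsCompact (carlesonBox φ δ) := by
  rw [carlesonBox_eq_image]
  exact (isCompact_Icc.prod isCompact_Icc).image (by fun_prop)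

lemma norm_one_sub_mul_conj_sq_le_of_mem_carlesonBox {r φ δ : ℝ} (h0 : 0 ≤ r) (h1 : r ≤ 1)
    {ζ : ℂ} (hζ : ζ ∈ carlesonBox φ δ) :
    ‖1 - r * exp (φ * I) * conj ζ‖ ^ 2 ≤ (1 - r + δ) ^ 2 + (π * δ) ^ 2 := by
  obtain ⟨h_le, h_ge, θ, hθ, hζ⟩ := hζ
  set ρ := ‖ζ‖
  have hρ : 0 ≤ ρ := norm_nonneg ζ
  have h_rρ : r * ρ ≤ 1 := mul_le_one₀ h1 hρ h_le
  have h_polar : r * exp (φ * I) * conj ζ = (r * ρ : ℝ) * exp ((φ - θ : ℝ) * I) := by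
    rw [hζ, map_mul, conj_ofReal, ← exp_conj, map_mul, conj_ofReal, conj_I, mul_mul_mul_comm,
      ← exp_add]
    push_cast
    ring_nf
  have h_radial : (1 - r * ρ) ^ 2 ≤ (1 - r + δ) ^ 2 := by
    have : r * (1 - ρ) ≤ 1 - ρ := mul_le_of_le_one_left (sub_nonneg.mpr h_le) h1
    exact pow_le_pow_left₀ (by linarith) (by linarith) 2
  have h_angular : (φ - θ) ^ 2 ≤ (π * δ) ^ 2 :=
    sq_le_sq.mpr ((abs_sub_comm φ θ).trans_le (hθ.trans (le_abs_self _)))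
  calc ‖1 - r * exp (φ * I) * conj ζ‖ ^ 2
      ≤ (1 - r * ρ) ^ 2 + r * ρ * (φ - θ) ^ 2 := by
        rw [h_polar]
        exact norm_one_sub_ofReal_mul_exp_sq_le (mul_nonneg h0 hρ) _
    _ ≤ (1 - r * ρ) ^ 2 + (φ - θ) ^ 2 := by
        gcongr
        exact mul_le_of_le_one_left (sq_nonneg _) h_rρ
    _ ≤ (1 - r + δ) ^ 2 + (π * δ) ^ 2 := add_le_add h_radial h_angular

section Kernel

variable {z ζ : ℂ}

lemma measurable_kkerExt (z : ℂ) : Measurable (KkerExt z) := by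
  have h_conj : Measurable (conj : ℂ → ℂ) := continuous_conj.measurable
  exact Measurable.ite (measurableSet_lt measurable_norm measurable_const) (by fun_prop)
    (by fun_prop)

lemma kkerExt_of_norm_lt_one (z : ℂ) (hζ : ‖ζ‖ < 1) :
    KkerExt z ζ = Real.log (‖1 - z * conj ζ‖ ^ 2 / ‖ζ - z‖ ^ 2) / (2 * (1 - ‖ζ‖)) := by
  have : 1 - ‖ζ‖ ≠ 0 := by linarith
  rw [KkerExt, if_pos hζ, norm_div, norm_sub_rev z, ← div_pow, Real.log_pow]
  push_cast
  field_simp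

lemma kkerExt_of_one_le_norm (z : ℂ) (hζ : 1 ≤ ‖ζ‖) :
    KkerExt z ζ = (1 - ‖z‖ ^ 2) / ‖ζ - z‖ ^ 2 :=
  if_neg hζ.not_gt

lemma le_kkerExt (hz : ‖z‖ < 1) (hζ : ‖ζ‖ ≤ 1) (hne : ζ ≠ z) :
    (1 - ‖z‖ ^ 2) * (1 + ‖ζ‖) / (2 * ‖1 - z * conj ζ‖ ^ 2) ≤ KkerExt z ζ := by
  have h_id := norm_one_sub_mul_conj_sq z ζ
  have hA := norm_one_sub_mul_conj_pos hz hζ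
  have hD : 0 < ‖ζ - z‖ := norm_pos_iff.mpr (sub_ne_zero.mpr hne)
  rcases hζ.lt_or_eq with hlt | heq
  · have : 0 < 1 - ‖ζ‖ := sub_pos.mpr hlt
    have h_log := Real.one_sub_inv_le_log_of_pos (x := ‖1 - z * conj ζ‖ ^ 2 / ‖ζ - z‖ ^ 2)
      (by positivity)
    rw [kkerExt_of_norm_lt_one z hlt]
    calc (1 - ‖z‖ ^ 2) * (1 + ‖ζ‖) / (2 * ‖1 - z * conj ζ‖ ^ 2)
        = (1 - (‖1 - z * conj ζ‖ ^ 2 / ‖ζ - z‖ ^ 2)⁻¹) / (2 * (1 - ‖ζ‖)) := by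
          rw [inv_div, eq_div_iff (by positivity)]
          field_simp
          linear_combination -h_id
      _ ≤ Real.log (‖1 - z * conj ζ‖ ^ 2 / ‖ζ - z‖ ^ 2) / (2 * (1 - ‖ζ‖)) := by gcongr
  · rw [kkerExt_of_one_le_norm z heq.ge, h_id, heq]
    apply le_of_eq
    field_simp
    ring

lemma kkerExt_le (hz : ‖z‖ < 1) (hζ : ‖ζ‖ ≤ 1) (hne : ζ ≠ z) :
    KkerExt z ζ ≤ (1 - ‖z‖ ^ 2) * (1 + ‖ζ‖) / (2 * ‖ζ - z‖ ^ 2) := by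
  have h_id := norm_one_sub_mul_conj_sq z ζ
  have hA := norm_one_sub_mul_conj_pos hz hζ
  have hD : 0 < ‖ζ - z‖ := norm_pos_iff.mpr (sub_ne_zero.mpr hne)
  rcases hζ.lt_or_eq with hlt | heq
  · have : 0 < 1 - ‖ζ‖ := sub_pos.mpr hlt
    have h_log := Real.log_le_sub_one_of_pos (x := ‖1 - z * conj ζ‖ ^ 2 / ‖ζ - z‖ ^ 2)
      (by positivity)
    rw [kkerExt_of_norm_lt_one z hlt]
    calc Real.log (‖1 - z * conj ζ‖ ^ 2 / ‖ζ - z‖ ^ 2) / (2 * (1 - ‖ζ‖))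
        ≤ (‖1 - z * conj ζ‖ ^ 2 / ‖ζ - z‖ ^ 2 - 1) / (2 * (1 - ‖ζ‖)) := by gcongr
      _ = (1 - ‖z‖ ^ 2) * (1 + ‖ζ‖) / (2 * ‖ζ - z‖ ^ 2) := by
          rw [div_eq_iff (by positivity)]
          field_simp
          linear_combination h_id
  · rw [kkerExt_of_one_le_norm z heq.ge, heq]
    apply le_of_eq
    field_simp
    ring

lemma kkerExt_nonneg (hz : ‖z‖ < 1) (hζ : ‖ζ‖ ≤ 1) (hne : ζ ≠ z) : 0 ≤ KkerExt z ζ := by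
  have : 0 ≤ 1 - ‖z‖ ^ 2 := sub_nonneg.mpr (pow_le_one₀ (norm_nonneg z) hz.le)
  exact le_trans (by positivity) (le_kkerExt hz hζ hne)

end Kernel

lemma integrableOn_kkerExt_carlesonBox {φ δ : ℝ} {z : ℂ} {μ : Measure ℂ} (hz : ‖z‖ < 1 - δ)
    (hμ : μ (carlesonBox φ δ) ≠ ⊤) :
    IntegrableOn (KkerExt z) (carlesonBox φ δ) μ := by
  refine IntegrableOn.of_bound hμ.lt_top (measurable_kkerExt z).aestronglyMeasurable
    ((1 - ‖z‖ ^ 2) * (1 + 1) / (2 * (1 - δ - ‖z‖) ^ 2)) ?_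
  filter_upwards [ae_restrict_mem (isCompact_carlesonBox φ δ).measurableSet]
    with ζ ⟨hζ_le, hζ_ge, _⟩
  have hz1 : ‖z‖ < 1 := by linarith
  have hne : ζ ≠ z := fun h => by rw [h] at hζ_ge; linarith
  have h_dist : 1 - δ - ‖z‖ ≤ ‖ζ - z‖ := by linarith [norm_sub_norm_le ζ z]
  have : 0 < 1 - δ - ‖z‖ := by linarith
  have h_num : 0 ≤ 1 - ‖z‖ ^ 2 := sub_nonneg.mpr (pow_le_one₀ (norm_nonneg z) hz1.le)
  rw [Real.norm_of_nonneg (kkerExt_nonneg hz1 hζ_le hne)]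
  exact (kkerExt_le hz1 hζ_le hne).trans (by gcongr)

lemma le_kkerExt_of_mem_carlesonBox {r φ : ℝ} (h0 : 0 ≤ r) (h1 : r < 1) {ζ : ℂ}
    (hζ : ζ ∈ carlesonBox φ ((1 - r) / 2)) :
    1 / (3 * (π ^ 2 / 4 + 1)) / (1 - r) ≤ KkerExt (r * exp (φ * I)) ζ := by
  have h_pos : 0 < 1 - r := sub_pos.mpr h1
  have hz : ‖(r : ℂ) * exp (φ * I)‖ = r := norm_ofReal_mul_exp_ofReal_mul_I h0 φ
  have hζ_le : ‖ζ‖ ≤ 1 := hζ.1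
  have hζ_ge : 1 / 2 ≤ ‖ζ‖ := by linarith [hζ.2.1]
  have hne : ζ ≠ r * exp (φ * I) := fun h => by
    have := hζ.2.1
    rw [h, hz] at this
    linarith
  have hA := norm_one_sub_mul_conj_pos (hz.trans_lt h1) hζ_le
  have hA_le : ‖1 - r * exp (φ * I) * conj ζ‖ ^ 2 ≤ 9 / 4 * (π ^ 2 / 4 + 1) * (1 - r) ^ 2 := by
    have h_box := norm_one_sub_mul_conj_sq_le_of_mem_carlesonBox h0 h1.le hζ
    have : 0 ≤ π ^ 2 * (1 - r) ^ 2 := by positivity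
    linarith
  calc 1 / (3 * (π ^ 2 / 4 + 1)) / (1 - r)
      = (1 - r) * (1 + 1 / 2) / (2 * (9 / 4 * (π ^ 2 / 4 + 1) * (1 - r) ^ 2)) := by
        field_simp
        norm_num
    _ ≤ (1 - r ^ 2) * (1 + ‖ζ‖) / (2 * ‖1 - r * exp (φ * I) * conj ζ‖ ^ 2) := by
        have h_num : 1 - r ≤ 1 - r ^ 2 := sub_le_sub_left (pow_le_of_le_one h0 h1.le two_ne_zero) 1
        have h_nonneg : 0 ≤ 1 - r ^ 2 := h_pos.le.trans h_num
        gcongr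
    _ ≤ KkerExt (r * exp (φ * I)) ζ := by
        simpa only [hz] using le_kkerExt (hz.trans_lt h1) hζ_le hne

theorem stmt16_general {μ : Measure ℂ} {r φ : ℝ} (h0 : 0 ≤ r) (h1 : r < 1)
    (hμ : μ (carlesonBox φ ((1 - r) / 2)) ≠ ⊤) :
    1 / (3 * (π ^ 2 / 4 + 1)) * (μ (carlesonBox φ ((1 - r) / 2))).toReal / (1 - r) ≤
      ∫ ζ in carlesonBox φ ((1 - r) / 2), KkerExt (r * exp (φ * I)) ζ ∂μ := by
  have hz : ‖(r : ℂ) * exp (φ * I)‖ < 1 - (1 - r) / 2 := by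
    rw [norm_ofReal_mul_exp_ofReal_mul_I h0]
    linarith
  rw [mul_div_right_comm]
  exact setIntegral_ge_of_const_le_real (isCompact_carlesonBox _ _).measurableSet hμ
    (fun _ => le_kkerExt_of_mem_carlesonBox h0 h1) (integrableOn_kkerExt_carlesonBox hz hμ)

/-- There is an absolute constant `c > 0` such that for every finite
positive Borel measure `λ` on the closed unit disc, every `r ∈ [0,1)` and `φ ∈ ℝ`,
`∫_{C(φ,(1-r)/2)} K(re^{iφ},ζ) dλ(ζ) ≥ c·λ(C(φ,(1-r)/2))/(1-r)`. -/
theorem stmt16 :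
    ∃ c : ℝ, 0 < c ∧ ∀ (lam : Measure ℂ), IsFiniteMeasure lam →
      lam (Metric.closedBall (0 : ℂ) 1)ᶜ = 0 →
      ∀ r : ℝ, 0 ≤ r → r < 1 → ∀ φ : ℝ,
        c * (lam (carlesonBox φ ((1 - r) / 2))).toReal / (1 - r) ≤
          ∫ ζ in carlesonBox φ ((1 - r) / 2),
            KkerExt ((r : ℂ) * Complex.exp (φ * Complex.I)) ζ ∂lam := by
  exact ⟨1 / (3 * (π ^ 2 / 4 + 1)), by positivity,
    fun _ _ _ _ h0 h1 _ => stmt16_general h0 h1 (measure_ne_top _ _)⟩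
end
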